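/- Let X be a finite simple connected graph with minimum degree at least 2 that is not a simple cycle, and let p > 2 be a prime. Then Aut(X) acts faithfully on H_1(X, ℤ_p). -/

import Mathlib

open SimpleGraph
variable {V : Type*}

variable {V : Type*}

/-- The cycle space (= first homology with coefficients in `R`) of a graph,
realized as antisymmetric flows supported on edges with zero divergence. -/
def cycleSpace (R : Type*) [CommRing R] [Fintype V] (G : SimpleGraph V) :
    Submodule R (V → V → R) where
  carrier := {f | (∀ u v, ¬ G.Adj u v → f u v = 0) ∧ (∀ u v, f u v = - f v u) ∧
    (∀ u, ∑ v, f u v = 0)}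
  add_mem' := by
    rintro f g ⟨hf1, hf2, hf3⟩ ⟨hg1, hg2, hg3⟩
    refine ⟨fun u v h => by simp [hf1 u v h, hg1 u v h], fun u v => ?_, fun u => ?_⟩
    · simp only [Pi.add_apply]; rw [hf2 u v, hg2 u v]; ring
    · simp [Finset.sum_add_distrib, hf3 u, hg3 u]
  zero_mem' := ⟨fun _ _ _ => rfl, fun _ _ => by simp, fun _ => by simp⟩
  smul_mem' := by
    rintro c f ⟨h1, h2, h3⟩
    refine ⟨fun u v h => by simp [h1 u v h], fun u v => by simp [h2 u v], fun u => ?_⟩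
    simp only [Pi.smul_apply, smul_eq_mul]
    rw [← Finset.mul_sum, h3 u, mul_zero]

/-- An automorphism acts trivially (as the identity) on `H_1(X,R)`. -/
def FixesH1 (R : Type*) [CommRing R] [Fintype V] (G : SimpleGraph V) (f : G ≃g G) : Prop :=
  ∀ c ∈ cycleSpace R G, ∀ u v : V, c (f u) (f v) = c u v

/-!
Since `-1 ≠ 1`, the `1`-chain of a closed trail determines its directed edges, so an automorphism
`f` acting trivially on homology maps every closed trail onto itself with its direction.

If `f` fixes `u` but moves a neighbour `v`, then `u` has no neighbour other than `v` in the
component of `v` in `G - u`: for another one `x`, the closed trail `u, v, ..., x, u` would leave `u`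
only towards `v`. Hence only `v` can be a leaf of this component, which therefore contains a cycle.
As `f` preserves the cycle, it preserves the component, and `f v` is a second neighbour of `u` in
it. So fixed vertices propagate along edges.

For a first fixed vertex, take a cycle `C` and a vertex `w` of `C` with an edge outside `C`, and
delete the edges of `C`. If the component of `w` meets `C` again, the theta graph so obtained forces
`f w = w`. Otherwise this component contains a cycle, so it contains `f w`, which lies on `C` and
hence equals `w`.
-/

section Graphs

variable {G : SimpleGraph V}

theorem forall_of_preconnected_of_adj (hG : G.Preconnected) {P : V → Prop}
    (hP : ∀ ⦃u v⦄, G.Adj u v → P u → P v) {u : V} (hu : P u) (v : V) : P v := by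
  obtain ⟨q⟩ := hG u v
  induction q with
  | nil => exact hu
  | cons h _ ih => exact ih (hP h hu)

theorem exists_isCycle_reachable [Finite V] {w : V} (hw : (G.neighborSet w).Nonempty)
    (hdeg : ∀ x, G.Reachable w x → x ≠ w → (G.neighborSet x).Nontrivial) :
    ∃ (z : V) (C : G.Walk z z), C.IsCycle ∧ G.Reachable w z := by
  classical
  by_contra! hno
  let K := G.connectedComponentMk w
  have hreach (x : K) : G.Reachable w x := (ConnectedComponent.exact x.2).symm
  have htree : K.toSimpleGraph.IsTree :=
    ⟨K.connected_toSimpleGraph, fun z C hC ↦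
      hno z _ (hC.map (f := K.toSimpleGraph_hom) Subtype.val_injective) (hreach z)⟩
  obtain ⟨c, hwc : G.Adj w c⟩ := hw
  have : Nontrivial K := ⟨⟨w, rfl⟩, ⟨c, ConnectedComponent.sound hwc.symm.reachable⟩, fun h ↦
    hwc.ne (congrArg Subtype.val h)⟩
  have : Fintype K := Fintype.ofFinite K
  obtain ⟨x, hxw, hx⟩ : ∃ x : K, (x : V) ≠ w ∧ K.toSimpleGraph.degree x = 1 := by
    obtain ⟨x, y, hxy, hx, hy⟩ := htree.exists_ne_and_degree_eq_one
    by_cases hxw : (x : V) = w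
    · exact ⟨y, fun hyw ↦ hxy (Subtype.ext (hxw.trans hyw.symm)), hy⟩
    · exact ⟨x, hxw, hx⟩
  obtain ⟨y, hy : G.Adj x y, z, hz : G.Adj x z, hyz⟩ := hdeg x (hreach x) hxw
  have hmem {a : V} (ha : G.Adj x a) : a ∈ K :=
    ConnectedComponent.sound (ha.symm.reachable.trans (hreach x).symm)
  exact hyz (congrArg Subtype.val ((degree_eq_one_iff_existsUnique_adj.1 hx).unique
    (y₁ := ⟨y, hmem hy⟩) (y₂ := ⟨z, hmem hz⟩) hy hz))

theorem exists_adj_notMem_edges_of_isCycle (hG : G.Preconnected) {u : V} {C : G.Walk u u}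
    (hC : C.IsCycle) (hdeg : ∃ v, (G.neighborSet v).ncard ≠ 2) :
    ∃ w ∈ C.support, ∃ c, G.Adj w c ∧ s(w, c) ∉ C.edges := by
  by_contra! hall
  obtain ⟨v, hv⟩ := hdeg
  have hvC : v ∈ C.support := forall_of_preconnected_of_adj hG
    (fun a b hab ha ↦ C.snd_mem_support_of_mem_edges (hall a ha b hab)) C.start_mem_support v
  refine hv ?_
  rw [← hC.ncard_neighborSet_toSubgraph_eq_two hvC]
  congr 1
  ext b
  rw [mem_neighborSet, Subgraph.mem_neighborSet, Walk.adj_toSubgraph_iff_mem_edges]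
  exact ⟨hall v hvC b, C.adj_of_mem_edges⟩

theorem mem_edges_iff_mem_darts_or_symm_mem_darts {u v : V} {p : G.Walk u v} {d : G.Dart} :
    d.edge ∈ p.edges ↔ d ∈ p.darts ∨ d.symm ∈ p.darts := by
  constructor
  · intro h
    obtain ⟨d', hd', he⟩ := List.mem_map.1 h
    rcases (dart_edge_eq_iff d' d).1 he with rfl | rfl
    · exact Or.inl hd'
    · exact Or.inr hd'
  · rintro (h | h)
    · exact List.mem_map_of_mem h
    · exact d.edge_symm ▸ List.mem_map_of_mem h

theorem symm_notMem_darts_of_isTrail {u v : V} {p : G.Walk u v} (hp : p.IsTrail) {d : G.Dart}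
    (hd : d ∈ p.darts) : d.symm ∉ p.darts := fun hd' ↦
  d.symm_ne (List.inj_on_of_nodup_map hp.edges_nodup hd' hd d.edge_symm)

end Graphs

section WalkFlow

variable (R : Type*) [CommRing R] {G : SimpleGraph V}

open Classical in
/-- The `1`-chain of a walk, encoded like the elements of `cycleSpace` as an antisymmetric function
on ordered pairs: traversals of `(x, y)` minus traversals of `(y, x)`. -/
noncomputable def walkFlow {u v : V} (p : G.Walk u v) (x y : V) : R :=
  (p.darts.map Dart.toProd).count (x, y) - (p.darts.map Dart.toProd).count (y, x)

variable {R}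

theorem walkFlow_eq_zero_of_not_adj {u v : V} (p : G.Walk u v) {x y : V} (h : ¬ G.Adj x y) :
    walkFlow R p x y = 0 := by
  classical
  have hcount {a b : V} (hab : ¬ G.Adj a b) : (p.darts.map Dart.toProd).count (a, b) = 0 := by
    refine List.count_eq_zero.2 fun hmem ↦ hab ?_
    obtain ⟨d, -, hd⟩ := List.mem_map.1 hmem
    simpa [hd] using d.adj
  simp [walkFlow, hcount h, hcount (mt Adj.symm h)]

open Classical in
theorem sum_walkFlow [Fintype V] {u v : V} (p : G.Walk u v) (x : V) :
    ∑ y, walkFlow R p x y = (if x = u then 1 else 0) - (if x = v then 1 else 0) := by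
  induction p with
  | nil => simp [walkFlow]
  | @cons a b c hab p ih =>
    have hcons (y : V) : walkFlow R (p.cons hab) x y = walkFlow R p x y +
        ((if x = a ∧ y = b then 1 else 0) - (if x = b ∧ y = a then 1 else 0)) := by
      simp only [walkFlow, Walk.darts_cons, List.map_cons, List.count_cons, beq_iff_eq,
        Prod.mk.injEq]
      push_cast
      grind
    simp only [hcons, Finset.sum_add_distrib, Finset.sum_sub_distrib, ih, ite_and,
      Finset.sum_ite_irrel, Finset.sum_ite_eq', Finset.mem_univ, if_true, Finset.sum_const_zero]
    ring

theorem walkFlow_mem_cycleSpace [Fintype V] {u : V} (C : G.Walk u u) :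
    walkFlow R C ∈ cycleSpace R G :=
  ⟨fun _ _ h ↦ walkFlow_eq_zero_of_not_adj C h, fun _ _ ↦ (neg_sub _ _).symm, fun x ↦ by
    rw [sum_walkFlow, sub_self]⟩

theorem walkFlow_eq_one_iff (hR : (-1 : R) ≠ 1) {u v : V} {p : G.Walk u v} (hp : p.IsTrail)
    (d : G.Dart) : walkFlow R p d.fst d.snd = 1 ↔ d ∈ p.darts := by
  classical
  have hcount (e : G.Dart) : (p.darts.map Dart.toProd).count e.toProd = p.darts.count e :=
    List.count_map_of_injective _ _ Dart.toProd_injective _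
  have hnodup : p.darts.Nodup := hp.edges_nodup.of_map
  have hflow : walkFlow R p d.fst d.snd = p.darts.count d - p.darts.count d.symm := by
    rw [← hcount, ← hcount]
    rfl
  rw [hflow]
  by_cases hd : d ∈ p.darts
  · have hd' := symm_notMem_darts_of_isTrail hp hd
    simp [hd, List.count_eq_one_of_mem hnodup hd, List.count_eq_zero_of_not_mem hd']
  · refine iff_of_false ?_ hd
    by_cases hd' : d.symm ∈ p.darts
    · simpa [List.count_eq_zero_of_not_mem hd, List.count_eq_one_of_mem hnodup hd'] using hR
    · have hzero : (0 : R) ≠ 1 := fun h ↦ hR (eq_of_zero_eq_one h _ _)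
      simpa [List.count_eq_zero_of_not_mem hd, List.count_eq_zero_of_not_mem hd'] using hzero

end WalkFlow

/-- A dart lies on a closed trail if and only if its image under `f` does: the form, in terms of
walks, of acting trivially on first homology. Darts rather than edges keep track of directions. -/
def PreservesClosedTrails {G : SimpleGraph V} (f : G →g G) : Prop :=
  ∀ ⦃u : V⦄ ⦃C : G.Walk u u⦄, C.IsTrail → ∀ d : G.Dart, f.mapDart d ∈ C.darts ↔ d ∈ C.darts

theorem FixesH1.preservesClosedTrails {R : Type*} [CommRing R] (hR : (-1 : R) ≠ 1) [Fintype V]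
    {G : SimpleGraph V} {f : G ≃g G} (hf : FixesH1 R G f) : PreservesClosedTrails f.toHom := by
  intro u C hC d
  rw [← walkFlow_eq_one_iff hR hC, ← walkFlow_eq_one_iff hR hC]
  exact iff_of_eq (congrArg (· = 1) (hf _ (walkFlow_mem_cycleSpace C) d.fst d.snd))

namespace PreservesClosedTrails

variable {G : SimpleGraph V} {f : G →g G}

theorem mem_edges_iff (hf : PreservesClosedTrails f) {u : V} {C : G.Walk u u} (hC : C.IsTrail)
    {x y : V} (hxy : G.Adj x y) : s(f x, f y) ∈ C.edges ↔ s(x, y) ∈ C.edges := by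
  let d : G.Dart := ⟨(x, y), hxy⟩
  change (f.mapDart d).edge ∈ C.edges ↔ d.edge ∈ C.edges
  rw [mem_edges_iff_mem_darts_or_symm_mem_darts, mem_edges_iff_mem_darts_or_symm_mem_darts, hf hC d]
  exact or_congr_right (hf hC d.symm)

theorem apply_mem_support (hf : PreservesClosedTrails f) {u : V} {C : G.Walk u u} (hC : C.IsTrail)
    (hnil : ¬ C.Nil) : f u ∈ C.support :=
  C.dart_fst_mem_support_of_mem_darts ((hf hC _).2 (C.firstDart_mem_darts hnil))

/-- A cycle in the component of `w` is mapped to itself, so `f` maps this component to itself. -/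
theorem reachable_apply [Finite V] (hf : PreservesClosedTrails f) {H : SimpleGraph V} (hle : H ≤ G)
    (hH : ∀ ⦃x y⦄, H.Adj x y → H.Adj (f x) (f y)) {w : V} (hw : (H.neighborSet w).Nonempty)
    (hdeg : ∀ x, H.Reachable w x → x ≠ w → (H.neighborSet x).Nontrivial) :
    H.Reachable w (f w) := by
  obtain ⟨z, C, hC, hwz⟩ := exists_isCycle_reachable hw hdeg
  have hz : H.Reachable z (f z) := by
    classical
    have hmem := hf.apply_mem_support (hC.mapLe hle).isTrail (hC.mapLe hle).not_nil
    rw [Walk.support_mapLe_eq_support] at hmem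
    exact (C.takeUntil _ hmem).reachable
  let g : H →g H := ⟨f, fun h ↦ hH h⟩
  exact hwz.trans (hz.trans (hwz.map g).symm)

theorem apply_eq_of_reachable_deleteIncidenceSet (hf : PreservesClosedTrails f) {u v x : V}
    (hu : f u = u) (huv : G.Adj u v) (hux : G.Adj u x) (hxv : x ≠ v)
    (hvx : (G.deleteIncidenceSet u).Reachable v x) : f v = v := by
  obtain ⟨q, hq⟩ := hvx.exists_isPath
  let p : G.Walk v x := q.mapLe (G.deleteIncidenceSet_le u)
  have hp {a b : V} (hab : s(a, b) ∈ p.edges) : a ≠ u ∧ b ≠ u := by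
    rw [Walk.edges_mapLe_eq_edges] at hab
    exact (deleteIncidenceSet_adj.1 (q.adj_of_mem_edges hab)).2
  have hT : (Walk.cons huv (p.concat hux.symm)).IsTrail := by
    have hxu : s(x, u) ∉ p.edges := fun h ↦ (hp h).2 rfl
    have huv' : s(u, v) ∉ p.edges := fun h ↦ (hp h).1 rfl
    rw [Walk.isTrail_cons, Walk.concat_eq_append, Walk.isTrail_append]
    refine ⟨⟨hq.isTrail.mapLe _, by simp, by simpa using hxu⟩, ?_⟩
    simp [huv', hxv.symm, huv.ne']
  have hmem := (hf hT ⟨(u, v), huv⟩).2 (by simp)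
  simp only [Walk.darts_cons, Walk.darts_concat, List.concat_eq_append, Hom.mapDart_apply,
    Prod.map_apply, hu, List.mem_cons, Dart.ext_iff, Prod.mk.injEq, true_and, List.mem_append,
    hux.ne, false_and, List.not_mem_nil, or_self, or_false] at hmem
  rcases hmem with h | h
  · exact h
  · exact absurd rfl (hp (List.mem_map_of_mem h)).1

theorem apply_eq_of_adj [Finite V] (hf : PreservesClosedTrails f) (hinj : Function.Injective f)
    (hdeg : ∀ x, (G.neighborSet x).Nontrivial) {u v : V} (huv : G.Adj u v) (hu : f u = u) :
    f v = v := by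
  by_contra hv
  have hfv : G.Adj u (f v) := by simpa only [hu] using f.map_adj huv
  have hsep (x : V) (hvx : (G.deleteIncidenceSet u).Reachable v x) (hxv : x ≠ v) : ¬ G.Adj u x :=
    fun hux ↦ hv (hf.apply_eq_of_reachable_deleteIncidenceSet hu huv hux hxv hvx)
  refine hsep (f v) (hf.reachable_apply (G.deleteIncidenceSet_le u) ?_ ?_ ?_) hv hfv
  · intro x y hxy
    rw [deleteIncidenceSet_adj] at hxy ⊢
    exact ⟨f.map_adj hxy.1, fun h ↦ hxy.2.1 (hinj (h.trans hu.symm)),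
      fun h ↦ hxy.2.2 (hinj (h.trans hu.symm))⟩
  · obtain ⟨y, hvy, hyu⟩ := (hdeg v).exists_ne u
    exact ⟨y, deleteIncidenceSet_adj.2 ⟨hvy, huv.ne', hyu⟩⟩
  · intro x hvx hxv
    have hxu : x ≠ u := by
      obtain ⟨z, hxz⟩ := hvx.nonempty_neighborSet_right hxv.symm
      exact (deleteIncidenceSet_adj.1 hxz).2.1
    refine (hdeg x).mono fun y (hxy : G.Adj x y) ↦ deleteIncidenceSet_adj.2 ⟨hxy, hxu, ?_⟩
    rintro rfl
    exact hsep x hvx hxv hxy.symm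

theorem mapDart_mem_darts_of_append (hf : PreservesClosedTrails f) {u v : V} {p : G.Walk u v}
    {q r : G.Walk v u} (hpq : (p.append q).IsTrail) (hpr : (p.append r).IsTrail)
    (hqr : q.edges.Disjoint r.edges) {d : G.Dart} (hd : d ∈ p.darts) :
    f.mapDart d ∈ p.darts := by
  have hfq : f.mapDart d ∈ p.darts ∨ f.mapDart d ∈ q.darts := by
    simpa using (hf hpq d).2 (by simp [hd])
  have hfr : f.mapDart d ∈ p.darts ∨ f.mapDart d ∈ r.darts := by
    simpa using (hf hpr d).2 (by simp [hd])
  by_contra hp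
  exact hqr (List.mem_map_of_mem (hfq.resolve_left hp)) (List.mem_map_of_mem (hfr.resolve_left hp))

/-- `f` preserves each of the three arcs of a theta graph with branch vertices `w` and `y`, so `f w`
is the source of an edge of `C₁` and the target of an edge of `C₂`. -/
theorem apply_eq_of_isCycle_append (hf : PreservesClosedTrails f) {w y : V} {C₁ Q : G.Walk w y}
    {C₂ : G.Walk y w} (hC : (C₁.append C₂).IsCycle) (hQ : Q.IsTrail) (hyw : y ≠ w)
    (hQ₁ : Q.edges.Disjoint C₁.edges) (hQ₂ : Q.edges.Disjoint C₂.edges) : f w = w := by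
  obtain ⟨hC₁, hC₂, hC₁₂⟩ := (Walk.isTrail_append C₁ C₂).1 hC.isTrail
  have hC₁Q : (C₁.append Q.reverse).IsTrail :=
    (Walk.isTrail_append _ _).2 ⟨hC₁, hQ.reverse, by simpa using hQ₁.symm⟩
  have hC₂Q : (C₂.append Q).IsTrail := (Walk.isTrail_append _ _).2 ⟨hC₂, hQ, hQ₂.symm⟩
  have hC₂C₁ : (C₂.append C₁).IsTrail := (Walk.isTrail_append _ _).2 ⟨hC₂, hC₁, hC₁₂.symm⟩
  have hsource : f w ∈ C₁.support :=
    C₁.dart_fst_mem_support_of_mem_darts <|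
      hf.mapDart_mem_darts_of_append hC.isTrail hC₁Q (by simpa using hQ₂.symm)
        (C₁.firstDart_mem_darts (Walk.not_nil_of_ne hyw.symm))
  have htarget : f w ∈ C₂.support.tail := by
    rw [← Walk.map_snd_darts]
    exact List.mem_map_of_mem (f := (·.snd)) <|
      hf.mapDart_mem_darts_of_append hC₂C₁ hC₂Q hQ₁.symm
        (C₂.lastDart_mem_darts (Walk.not_nil_of_ne hyw))
  have hdisj : C₁.support.tail.Disjoint C₂.support.tail := by
    have hnodup := hC.support_nodup
    rw [Walk.tail_support_append] at hnodup
    exact List.disjoint_of_nodup_append hnodup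
  exact (C₁.mem_support_iff.1 hsource).resolve_right fun h ↦ hdisj h htarget

theorem apply_eq_of_reachable_deleteEdges (hf : PreservesClosedTrails f) {w y : V}
    {C : G.Walk w w} (hC : C.IsCycle) (hy : y ∈ C.support) (hyw : y ≠ w)
    (hwy : (G.deleteEdges C.edgeSet).Reachable w y) : f w = w := by
  obtain ⟨Q, hQ⟩ := hwy.exists_isPath
  have hQC : (Q.mapLe (G.deleteEdges_le _)).edges.Disjoint C.edges := by
    intro e heQ heC
    rw [Walk.edges_mapLe_eq_edges] at heQ
    have he := Q.edges_subset_edgeSet heQ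
    rw [edgeSet_deleteEdges] at he
    exact he.2 heC
  obtain ⟨C₁, C₂, rfl⟩ := Walk.mem_support_iff_exists_append.1 hy
  rw [Walk.edges_append, List.disjoint_append_right] at hQC
  exact hf.apply_eq_of_isCycle_append hC (hQ.isTrail.mapLe _) hyw hQC.1 hQC.2

theorem apply_eq_of_adj_of_notMem_edges [Finite V] (hf : PreservesClosedTrails f)
    (hdeg : ∀ x, (G.neighborSet x).Nontrivial) {w c : V} {C : G.Walk w w} (hC : C.IsCycle)
    (hwc : G.Adj w c) (hc : s(w, c) ∉ C.edges) : f w = w := by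
  by_contra hw
  have hsep (x : V) (hwx : (G.deleteEdges C.edgeSet).Reachable w x) (hxw : x ≠ w) :
      x ∉ C.support :=
    fun hx ↦ hw (hf.apply_eq_of_reachable_deleteEdges hC hx hxw hwx)
  refine hsep (f w) (hf.reachable_apply (G.deleteEdges_le _) ?_ ?_ ?_) hw
    (hf.apply_mem_support hC.isTrail hC.not_nil)
  · intro x y hxy
    rw [deleteEdges_adj, Walk.mem_edgeSet] at hxy ⊢
    exact ⟨f.map_adj hxy.1, mt (hf.mem_edges_iff hC.isTrail hxy.1).1 hxy.2⟩
  · exact ⟨c, deleteEdges_adj.2 ⟨hwc, hc⟩⟩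
  · intro x hwx hxw
    exact (hdeg x).mono fun y hxy ↦ deleteEdges_adj.2
      ⟨hxy, fun he ↦ hsep x hwx hxw (C.fst_mem_support_of_mem_edges he)⟩

theorem exists_apply_eq [Finite V] (hf : PreservesClosedTrails f) (hG : G.Connected)
    (hdeg : ∀ x, (G.neighborSet x).Nontrivial) (hdeg' : ∃ v, (G.neighborSet v).ncard ≠ 2) :
    ∃ w, f w = w := by
  classical
  obtain ⟨v⟩ := hG.nonempty
  obtain ⟨u, C, hC, -⟩ := exists_isCycle_reachable (hdeg v).nonempty fun x _ _ ↦ hdeg x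
  obtain ⟨w, hw, c, hwc, hc⟩ := exists_adj_notMem_edges_of_isCycle hG.preconnected hC hdeg'
  exact ⟨w, hf.apply_eq_of_adj_of_notMem_edges hdeg (hC.rotate hw) hwc
    (mt (C.rotate_edges w hw).mem_iff.1 hc)⟩

end PreservesClosedTrails

theorem aut_faithful_on_H1_mod_p_general {R : Type*} [CommRing R] (hR : (-1 : R) ≠ 1) [Fintype V]
    {G : SimpleGraph V} (hG : G.Connected) (hmin : ∀ v : V, 2 ≤ (G.neighborSet v).ncard)
    (hnotcyc : ¬ ∀ v : V, (G.neighborSet v).ncard = 2) {f : G ≃g G} (hf : FixesH1 R G f) (v : V) :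
    f v = v := by
  have htrails := hf.preservesClosedTrails hR
  have hdeg (x : V) : (G.neighborSet x).Nontrivial := Set.one_lt_ncard_iff_nontrivial.1 (hmin x)
  obtain ⟨w, hw⟩ := htrails.exists_apply_eq hG hdeg (not_forall.1 hnotcyc)
  exact forall_of_preconnected_of_adj hG.preconnected
    (fun _ _ ↦ htrails.apply_eq_of_adj f.injective hdeg) hw v

theorem aut_faithful_on_H1_mod_p [Fintype V]
    (G : SimpleGraph V) (hG : G.Connected)
    (hmin : ∀ v : V, 2 ≤ (G.neighborSet v).ncard)
    (hnotcyc : ¬ ∀ v : V, (G.neighborSet v).ncard = 2)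
    (p : ℕ) (hp : p.Prime) (hp2 : 2 < p) :
    ∀ f : G ≃g G, FixesH1 (ZMod p) G f → ∀ v : V, f v = v := by
  have : Fact (2 < p) := ⟨hp2⟩
  exact fun _ ↦ aut_faithful_on_H1_mod_p_general ZMod.neg_one_ne_one hG hmin hnotcyc
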